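/- arXiv:1408.2439 — 2 statements merged into one kernel-verified Lean document; each statement's English description precedes it below -/
import Mathlib

section
/- Let Δ be a root basis in a non-degenerate quadratic space (V,B) whose based root system (Δ,Φ) has level 1. Then (V,B) is a Lorentz space, any two distinct weights in Δ* are disjoint, and no weight in Δ* is space-like, i.e. B(ω,ω) ≤ 0 for all ω ∈ Δ*. -/
open scoped BigOperators

namespace BoydMaxwell

variable {V : Type*} [AddCommGroup V] [Module ℝ V]

/-- `(V, B)` is a Lorentz space: `B` is non-degenerate with exactly one negative
eigenvalue, i.e. there is a time-like vector but every subspace on which `B` is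
negative definite has dimension at most `1`. -/
def IsLorentz (B : LinearMap.BilinForm ℝ V) : Prop :=
  B.Nondegenerate ∧ (∃ v : V, B v v < 0) ∧
    ∀ W : Submodule ℝ V, (∀ v ∈ W, v ≠ 0 → B v v < 0) → Module.finrank ℝ W ≤ 1

/-- A root basis in the quadratic space `(V, B)`. -/
structure IsRootBasis (B : LinearMap.BilinForm ℝ V) (Δ : Finset V) : Prop where
  unit : ∀ α ∈ Δ, B α α = 1
  offdiag : ∀ α ∈ Δ, ∀ β ∈ Δ, α ≠ β →
    B α β ≤ -1 ∨ ∃ k : ℕ, 2 ≤ k ∧ B α β = -Real.cos (Real.pi / k)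
  posIndep : ∀ c : V → ℝ, (∀ α ∈ Δ, 0 ≤ c α) →
    (∑ α ∈ Δ, c α • α) = 0 → ∀ α ∈ Δ, c α = 0
  spans : Submodule.span ℝ (Δ : Set V) = ⊤

/-- The reflection `s_α : x ↦ x - 2 B(α,x) α`. -/
def reflection (B : LinearMap.BilinForm ℝ V) (α : V) : V →ₗ[ℝ] V :=
  LinearMap.id - (B α).smulRight ((2 : ℝ) • α)

/-- The Weyl group `W`: the subgroup of linear automorphisms generated by the
reflections in the simple roots. -/
def weylGroup (B : LinearMap.BilinForm ℝ V) (Δ : Finset V) : Subgroup (V ≃ₗ[ℝ] V) :=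
  Subgroup.closure { g : V ≃ₗ[ℝ] V | ∃ α ∈ Δ, (g : V →ₗ[ℝ] V) = reflection B α }

/-- The set of roots `Φ = W(Δ)`. -/
def roots (B : LinearMap.BilinForm ℝ V) (Δ : Finset V) : Set V :=
  { x | ∃ w ∈ weylGroup B Δ, ∃ α ∈ Δ, x = w α }

/-- The polyhedral cone of non-negative linear combinations of a finite set. -/
def cone (Δ : Finset V) : Set V :=
  { x | ∃ c : V → ℝ, (∀ α ∈ Δ, 0 ≤ c α) ∧ x = ∑ α ∈ Δ, c α • α }

/-- `F` is a face of the convex set `C`. -/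
def IsFace (C F : Set V) : Prop :=
  F ⊆ C ∧ Convex ℝ F ∧ ∀ x ∈ C, ∀ y ∈ C, ∀ t : ℝ, 0 < t → t < 1 →
    t • x + (1 - t) • y ∈ F → x ∈ F ∧ y ∈ F

/-- `I ⊆ Δ` is an `l`-facial subset: `Cone(I)` is a face of `Cone(Δ)` and
`Span(I)` has codimension `l` in `V`. -/
def IsFacial (Δ I : Finset V) (l : ℕ) : Prop :=
  I ⊆ Δ ∧ IsFace (cone Δ) (cone I) ∧
    Module.finrank ℝ (Submodule.span ℝ (I : Set V)) + l = Module.finrank ℝ V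

/-- `B` is positive semidefinite on the span of every `l`-facial subset. -/
def LevelLE (B : LinearMap.BilinForm ℝ V) (Δ : Finset V) (l : ℕ) : Prop :=
  ∀ I : Finset V, IsFacial Δ I l → ∀ x ∈ Submodule.span ℝ (I : Set V), 0 ≤ B x x

/-- The root system generated by `Δ` has level exactly `l`: `l` is the smallest
integer such that `B` is positive semidefinite on the span of every `l`-facial
subset of `Δ`. -/
def HasLevel (B : LinearMap.BilinForm ℝ V) (Δ : Finset V) (l : ℕ) : Prop :=
  LevelLE B Δ l ∧ ∀ m : ℕ, m < l → ¬ LevelLE B Δ m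

/-- `ω` is the weight associated to the `1`-facial subset `I`. -/
def IsWeight (B : LinearMap.BilinForm ℝ V) (Δ I : Finset V) (ω : V) : Prop :=
  IsFacial Δ I 1 ∧ (∀ α ∈ I, B α ω = 0) ∧
    (∀ α ∈ Δ, α ∉ I → 0 < B α ω) ∧
    (∀ α ∈ Δ, α ∉ I → 1 ≤ B α ω) ∧ (∃ α ∈ Δ, α ∉ I ∧ B α ω = 1)

/-- The set `Δ*` of weights. -/
def weights (B : LinearMap.BilinForm ℝ V) (Δ : Finset V) : Set V :=
  { ω | ∃ I : Finset V, IsWeight B Δ I ω }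

/-- The orbit `Ω = W(Δ*)`. -/
def Omega (B : LinearMap.BilinForm ℝ V) (Δ : Finset V) : Set V :=
  { x | ∃ w ∈ weylGroup B Δ, ∃ ω ∈ weights B Δ, x = w ω }

/-- Two vectors are disjoint: `B(x,y) ≤ 0` and `B` is not positive definite on
`Span{x,y}`. -/
def DisjointVec (B : LinearMap.BilinForm ℝ V) (x y : V) : Prop :=
  B x y ≤ 0 ∧ ¬ ∀ z ∈ Submodule.span ℝ ({x, y} : Set V), z ≠ 0 → 0 < B z z

/-- The fundamental chamber `C* = {x | B(x, α) ≥ 0 for all α ∈ Δ}`. -/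
def chamber (B : LinearMap.BilinForm ℝ V) (Δ : Finset V) : Set V :=
  { x | ∀ α ∈ Δ, 0 ≤ B x α }

/-- The Tits cone `T = ⋃_{w ∈ W} w(C*)`. -/
def titsCone (B : LinearMap.BilinForm ℝ V) (Δ : Finset V) : Set V :=
  { x | ∃ w ∈ weylGroup B Δ, ∃ y ∈ chamber B Δ, x = w y }

/-- The convex cone generated by an arbitrary set. -/
def coneOf (X : Set V) : Set V :=
  { x | ∃ (s : Finset V) (c : V → ℝ), (↑s ⊆ X) ∧ (∀ v ∈ s, 0 ≤ c v) ∧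
      x = ∑ v ∈ s, c v • v }


section helpers

lemma offdiag_nonpos {V : Type*} [AddCommGroup V] [Module ℝ V]
    {B : LinearMap.BilinForm ℝ V} {Δ : Finset V} (hΔ : IsRootBasis B Δ)
    {α β : V} (ha : α ∈ Δ) (hb : β ∈ Δ) (hne : α ≠ β) : B α β ≤ 0 := by
  rcases hΔ.offdiag α ha β hb hne with h | ⟨k, hk, h⟩
  · linarith
  · rw [h]
    have hk' : (2 : ℝ) ≤ k := by exact_mod_cast hk
    have : 0 ≤ Real.cos (Real.pi / k) := by
      apply Real.cos_nonneg_of_neg_pi_div_two_le_of_le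
      · have : 0 ≤ Real.pi / k := by positivity
        linarith [Real.pi_pos]
      · exact div_le_div_of_nonneg_left Real.pi_pos.le (by norm_num) hk'
    linarith

lemma exists_neg_in_cone {V : Type*} [AddCommGroup V] [Module ℝ V]
    {B : LinearMap.BilinForm ℝ V} {Δ : Finset V} (hΔ : IsRootBasis B Δ)
    {x : V} (hx : B x x < 0) :
    ∃ c : V → ℝ, (∀ α ∈ Δ, 0 ≤ c α) ∧
      B (∑ α ∈ Δ, c α • α) (∑ α ∈ Δ, c α • α) < 0 := by
  have hx' : x ∈ Submodule.span ℝ (Δ : Set V) := by rw [hΔ.spans]; trivial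
  obtain ⟨c, -, hc⟩ := Submodule.mem_span_finset.1 hx'
  refine ⟨fun α => |c α|, fun α _ => abs_nonneg _, ?_⟩
  refine lt_of_le_of_lt ?_ hx
  rw [← hc]
  simp only [map_sum, LinearMap.sum_apply, map_smul, LinearMap.smul_apply, smul_eq_mul]
  apply Finset.sum_le_sum
  intro a ha
  rw [Finset.mul_sum, Finset.mul_sum]
  apply Finset.sum_le_sum
  intro b hb
  by_cases hab : b = a
  · subst hab
    rw [hΔ.unit b hb]
    have := abs_mul_abs_self (c b)
    nlinarith
  · have h1 := offdiag_nonpos hΔ hb ha hab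
    have h2 : c a * c b ≤ |c a| * |c b| := by
      rw [← abs_mul]; exact le_abs_self _
    nlinarith

lemma exists_pos_functional {V : Type*} [AddCommGroup V] [Module ℝ V] [FiniteDimensional ℝ V]
    {B : LinearMap.BilinForm ℝ V} {Δ : Finset V} (hΔ : IsRootBasis B Δ) :
    ∃ f : V →ₗ[ℝ] ℝ, ∀ α ∈ Δ, 0 < f α := by
  let e := (Module.finBasis ℝ V).equivFun
  have h0 : (0 : Fin (Module.finrank ℝ V) → ℝ) ∉ convexHull ℝ (e '' (Δ : Set V)) := by
    intro h
    have h' := LinearMap.image_convexHull e.toLinearMap (Δ : Set V)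
    simp only [LinearEquiv.coe_coe] at h'
    rw [← h'] at h
    obtain ⟨y, hy, hy0⟩ := h
    have : y = 0 := by simpa using hy0
    subst this
    rw [Finset.mem_convexHull'] at hy
    obtain ⟨w, hw, hw1, hw2⟩ := hy
    have := hΔ.posIndep w hw hw2
    rw [Finset.sum_eq_zero this] at hw1
    norm_num at hw1
  have hcl : IsClosed (convexHull ℝ (e '' (Δ : Set V))) :=
    ((Δ.finite_toSet.image e).isCompact_convexHull (𝕜 := ℝ)).isClosed
  obtain ⟨f, u, hfu, hf⟩ := geometric_hahn_banach_point_closed (convex_convexHull ℝ _) hcl h0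
  refine ⟨(f : _ →ₗ[ℝ] ℝ) ∘ₗ e.toLinearMap, fun α ha => ?_⟩
  have := hf (e α) (subset_convexHull ℝ _ ⟨α, ha, rfl⟩)
  simp only [map_zero] at hfu
  simpa using hfu.trans this

open Classical in
lemma exists_facet_functional {V : Type*} [AddCommGroup V] [Module ℝ V] [FiniteDimensional ℝ V]
    {B : LinearMap.BilinForm ℝ V} {Δ : Finset V} (hΔ : IsRootBasis B Δ)
    {x0 : V} (hx0 : x0 ≠ 0) :
    ∃ f : V →ₗ[ℝ] ℝ, f ≠ 0 ∧ (∀ α ∈ Δ, 0 ≤ f α) ∧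
      Submodule.span ℝ ((Δ.filter (fun α => f α = 0) : Finset V) : Set V) = LinearMap.ker f := by
  let P : ℕ → Prop := fun d => ∃ f : V →ₗ[ℝ] ℝ, f ≠ 0 ∧ (∀ α ∈ Δ, 0 ≤ f α) ∧
    Module.finrank ℝ (Submodule.span ℝ ((Δ.filter (fun α => f α = 0) : Finset V) : Set V)) = d
  have hext : ∀ g h : V →ₗ[ℝ] ℝ, (∀ α ∈ Δ, g α = h α) → g = h := by
    intro g h hgh
    exact LinearMap.ext_on hΔ.spans hgh
  have hP : ∃ d, P d := by
    obtain ⟨f, hf⟩ := exists_pos_functional hΔ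
    refine ⟨_, f, ?_, fun α ha => (hf α ha).le, rfl⟩
    rintro rfl
    have hemp : Δ = ∅ := by
      by_contra hne
      obtain ⟨a, ha⟩ := Finset.nonempty_iff_ne_empty.2 hne
      simpa using hf a ha
    have hs := hΔ.spans
    rw [hemp] at hs
    simp only [Finset.coe_empty, Submodule.span_empty] at hs
    have : x0 ∈ (⊥ : Submodule ℝ V) := by rw [hs]; trivial
    exact hx0 (by simpa using this)
  have hbd : ∀ d, P d → d ≤ Module.finrank ℝ V := by
    rintro d ⟨f, -, -, rfl⟩
    exact Submodule.finrank_le _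
  obtain ⟨d0, hd0⟩ := hP
  have hmax := Nat.findGreatest_spec (P := P) (hbd d0 hd0) hd0
  obtain ⟨f, hf0, hfn, hfd⟩ := hmax
  refine ⟨f, hf0, hfn, ?_⟩
  set Z := Submodule.span ℝ ((Δ.filter (fun α => f α = 0) : Finset V) : Set V) with hZ
  have hle : Z ≤ LinearMap.ker f := by
    rw [hZ, Submodule.span_le]
    intro a ha
    simp at ha
    simpa using ha.2
  apply le_antisymm hle
  by_contra hnot
  obtain ⟨x, hxf, hxZ⟩ := SetLike.not_le_iff_exists.1 hnot
  have key : ∀ g : V →ₗ[ℝ] ℝ, g x ≠ 0 → Z ≤ LinearMap.ker g → (∃ α ∈ Δ, g α < 0) → False := by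
    intro g hgx hgZ hneg
    obtain ⟨a, ha, hga⟩ := hneg
    obtain ⟨b, hb, hbmin⟩ := Finset.exists_min_image (Δ.filter (fun α => g α < 0))
      (fun α => f α / (- g α)) ⟨a, by simp [ha, hga]⟩
    simp only [Finset.mem_filter] at hb hbmin
    obtain ⟨hbΔ, hgb⟩ := hb
    have hfb : 0 < f b := by
      rcases (hfn b hbΔ).lt_or_eq with h | h
      · exact h
      · exfalso
        have : b ∈ Z := Submodule.subset_span (by simp [hbΔ, ← h])
        have := hgZ this
        rw [LinearMap.mem_ker] at this
        linarith
    set t := f b / (- g b) with ht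
    have htpos : 0 < t := div_pos hfb (by linarith)
    have htb : t * g b = - f b := by
      have hgb0 := hgb.ne
      rw [ht]; field_simp
    let h : V →ₗ[ℝ] ℝ := f + t • g
    have hh : ∀ y, h y = f y + t * g y := fun y => by simp [h]
    have hPh : P (Module.finrank ℝ
        (Submodule.span ℝ ((Δ.filter (fun α => h α = 0) : Finset V) : Set V))) := by
      refine ⟨h, ?_, ?_, rfl⟩
      · intro h0
        have := hh x
        rw [h0, LinearMap.mem_ker.1 hxf] at this
        simp at this
        rcases this with h | h
        · exact htpos.ne' h
        · exact hgx h
      · intro α hα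
        rw [hh]
        by_cases hg : g α < 0
        · have h2 := hbmin α ⟨hα, hg⟩
          rw [le_div_iff₀ (by linarith)] at h2
          linarith
        · have := hfn α hα
          have := mul_nonneg htpos.le (not_lt.1 hg)
          linarith
    have hle2 := Nat.le_findGreatest (P := P) (hbd _ hPh) hPh
    rw [← hfd] at hle2
    have hlt : Z < Submodule.span ℝ ((Δ.filter (fun α => h α = 0) : Finset V) : Set V) := by
      refine lt_of_le_of_ne ?_ ?_
      · rw [hZ]
        rw [Submodule.span_le]
        intro c hc
        have hcZ : c ∈ Z := Submodule.subset_span hc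
        have hgc := LinearMap.mem_ker.1 (hgZ hcZ)
        simp only [Finset.coe_filter, Set.mem_ofPred_eq] at hc
        apply Submodule.subset_span
        simp [hc.1, hh, hc.2, hgc]
      · intro heq
        have hbZ : b ∈ Z := by
          rw [heq]
          apply Submodule.subset_span
          simp [hbΔ, hh, htb]
        have := LinearMap.mem_ker.1 (hgZ hbZ)
        linarith
    have := Submodule.finrank_lt_finrank_of_lt hlt
    omega
  obtain ⟨g, hgx, hgZ⟩ := Submodule.exists_le_ker_of_notMem hxZ
  have hex : ∃ α ∈ Δ, g α ≠ 0 := by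
    by_contra hcon
    push Not at hcon
    have := hext g 0 (by simpa using hcon)
    rw [this] at hgx
    simp at hgx
  obtain ⟨a, ha, hga⟩ := hex
  rcases lt_or_gt_of_ne hga with h | h
  · exact key g hgx hgZ ⟨a, ha, h⟩
  · refine key (-g) (by simpa using hgx) ?_ ⟨a, ha, by simpa using h⟩
    intro y hy
    have := LinearMap.mem_ker.1 (hgZ hy)
    simp [this]

lemma cone_convex {V : Type*} [AddCommGroup V] [Module ℝ V] (I : Finset V) :
    Convex ℝ (cone I) := by
  rintro x ⟨c, hc, rfl⟩ y ⟨d, hd, rfl⟩ a b ha hb -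
  refine ⟨fun α => a * c α + b * d α, fun α hα => ?_, ?_⟩
  · have := hc α hα
    have := hd α hα
    positivity
  · simp only [Finset.smul_sum, add_smul, mul_smul, Finset.sum_add_distrib]

open Classical in
lemma facial_of_functional {V : Type*} [AddCommGroup V] [Module ℝ V] [FiniteDimensional ℝ V]
    {Δ : Finset V} {f : V →ₗ[ℝ] ℝ} (hf0 : f ≠ 0) (hfn : ∀ α ∈ Δ, 0 ≤ f α)
    (hfs : Submodule.span ℝ ((Δ.filter (fun α => f α = 0) : Finset V) : Set V)
      = LinearMap.ker f) :
    IsFacial Δ (Δ.filter (fun α => f α = 0)) 1 := by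
  have hnn : ∀ x ∈ cone Δ, 0 ≤ f x := by
    rintro x ⟨c, hc, rfl⟩
    rw [map_sum]
    refine Finset.sum_nonneg fun α hα => ?_
    rw [map_smul, smul_eq_mul]
    exact mul_nonneg (hc α hα) (hfn α hα)
  have hin : ∀ x ∈ cone Δ, f x = 0 → x ∈ cone (Δ.filter (fun α => f α = 0)) := by
    rintro x ⟨c, hc, rfl⟩ hx
    rw [map_sum, Finset.sum_eq_zero_iff_of_nonneg] at hx
    · refine ⟨c, fun α hα => hc α (Finset.mem_of_mem_filter α hα), ?_⟩
      symm
      refine Finset.sum_subset (Finset.filter_subset _ _) fun α hα hα' => ?_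
      have := hx α hα
      simp only [map_smul, smul_eq_mul, mul_eq_zero] at this
      simp only [Finset.mem_filter, not_and] at hα'
      rcases this with h | h
      · simp [h]
      · exact absurd h (hα' hα)
    · intro α hα
      rw [map_smul, smul_eq_mul]
      exact mul_nonneg (hc α hα) (hfn α hα)
  refine ⟨Finset.filter_subset _ _, ⟨?_, cone_convex _, ?_⟩, ?_⟩
  · rintro x ⟨c, hc, rfl⟩
    refine ⟨fun α => if f α = 0 then c α else 0, fun α hα => ?_, ?_⟩
    · by_cases h : f α = 0
      · simpa [h] using hc α (by simp [hα, h])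
      · simp [h]
    · rw [Finset.sum_filter]
      refine Finset.sum_congr rfl fun α _ => ?_
      by_cases h : f α = 0 <;> simp [h]
  · intro x hx y hy t ht ht1 hxy
    have hz : f (t • x + (1 - t) • y) = 0 := by
      obtain ⟨c, hc, h⟩ := hxy
      rw [h, map_sum]
      refine Finset.sum_eq_zero fun α hα => ?_
      simp [(Finset.mem_filter.1 hα).2]
    simp only [map_add, map_smul, smul_eq_mul] at hz
    have h1 := hnn x hx
    have h2 := hnn y hy
    have h3 := mul_nonneg ht.le h1
    have h4 := mul_nonneg (sub_pos.2 ht1).le h2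
    have h5 : t * f x = 0 := by linarith
    have h6 : (1 - t) * f y = 0 := by linarith
    exact ⟨hin x hx ((mul_eq_zero.1 h5).resolve_left ht.ne'),
      hin y hy ((mul_eq_zero.1 h6).resolve_left (sub_pos.2 ht1).ne')⟩
  · rw [hfs]
    have h1 := LinearMap.finrank_range_add_finrank_ker f
    rw [LinearMap.range_eq_top.2 (LinearMap.surjective hf0)] at h1
    simp at h1
    omega

end helpers

/-- extending Maxwell, Proposition 1.4. If a based root system
in a non-degenerate quadratic space has level `1`, then the space is Lorentzian,
any two distinct weights are disjoint, and no weight is space-like. -/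
theorem level_one_weights
    {V : Type*} [AddCommGroup V] [Module ℝ V] [FiniteDimensional ℝ V]
    (B : LinearMap.BilinForm ℝ V) (hsymm : ∀ x y : V, B x y = B y x)
    (hnd : B.Nondegenerate)
    (Δ : Finset V) (hΔ : IsRootBasis B Δ) (h1 : HasLevel B Δ 1) :
    IsLorentz B ∧
      (∀ ω ∈ weights B Δ, ∀ ω' ∈ weights B Δ, ω ≠ ω' → DisjointVec B ω ω') ∧
      (∀ ω ∈ weights B Δ, B ω ω ≤ 0) := by
  classical
  obtain ⟨hL, hN⟩ := h1
  have hN0 := hN 0 one_pos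
  have hx : ∃ x, B x x < 0 := by
    unfold LevelLE at hN0
    push Not at hN0
    obtain ⟨I, -, x, -, hx⟩ := hN0
    exact ⟨x, hx⟩
  obtain ⟨x, hx⟩ := hx
  have hx0 : x ≠ 0 := by rintro rfl; simp at hx
  obtain ⟨f, hf0, hfn, hfs⟩ := exists_facet_functional hΔ hx0
  have hker : ∀ y, f y = 0 → 0 ≤ B y y := by
    intro y hy
    apply hL _ (facial_of_functional hf0 hfn hfs)
    rw [hfs]
    exact hy
  have hcausal : ∀ ω ∈ weights B Δ, B ω ω ≤ 0 := by
    rintro ω ⟨I, hI, hz, hpos, -, -⟩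
    by_contra hcon
    have hc : 0 < B ω ω := not_le.1 hcon
    have horth : ∀ y ∈ Submodule.span ℝ (I : Set V), B y ω = 0 := by
      intro y hy
      have : Submodule.span ℝ (I : Set V) ≤ LinearMap.ker (B.flip ω) := by
        rw [Submodule.span_le]
        intro a ha
        simpa using hz a ha
      simpa using this hy
    have hωI : ω ∉ Submodule.span ℝ (I : Set V) := fun h => hc.ne' (horth ω h)
    have hle : Submodule.span ℝ (I : Set V) ≤ LinearMap.ker (B.flip ω) := fun y hy => by
      simpa using horth y hy
    have hg0 : (B.flip ω : V →ₗ[ℝ] ℝ) ≠ 0 := by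
      intro h
      have : B.flip ω ω = 0 := by rw [h]; simp
      exact hc.ne' (by simpa using this)
    have hfr := LinearMap.finrank_range_add_finrank_ker (B.flip ω)
    rw [LinearMap.range_eq_top.2 (LinearMap.surjective hg0)] at hfr
    have heq : Submodule.span ℝ (I : Set V) = LinearMap.ker (B.flip ω) := by
      apply Submodule.eq_of_le_of_finrank_eq hle
      have := hI.2.2
      simp at hfr
      omega
    have hp : x - (B x ω / B ω ω) • ω ∈ Submodule.span ℝ (I : Set V) := by
      rw [heq]
      simp [hc.ne']
    have h1 := hL I hI _ hp
    have h2 := horth _ hp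
    set p := x - (B x ω / B ω ω) • ω with hpdef
    have hxp : x = p + (B x ω / B ω ω) • ω := by rw [hpdef]; abel
    set r := B x ω / B ω ω
    have : B x x = B p p + r ^ 2 * B ω ω := by
      rw [hxp]
      simp only [map_add, LinearMap.add_apply, map_smul, LinearMap.smul_apply, smul_eq_mul,
        hsymm ω p, h2]
      ring
    have := mul_nonneg (sq_nonneg r) hc.le
    linarith
  refine ⟨⟨hnd, ⟨x, hx⟩, ?_⟩, ?_, hcausal⟩
  · intro W hW
    by_contra hcon
    have hlt : Module.finrank ℝ ℝ < Module.finrank ℝ W := by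
      simp; omega
    have hk := LinearMap.ker_ne_bot_of_finrank_lt (f := f ∘ₗ W.subtype) hlt
    obtain ⟨y, hy, hy0⟩ := Submodule.exists_mem_ne_zero_of_ne_bot hk
    have h1 := hW y y.2 (by simpa using hy0)
    have h2 := hker y (by simpa using hy)
    linarith
  · obtain ⟨c, hc, hv⟩ := exists_neg_in_cone hΔ hx
    set v := ∑ α ∈ Δ, c α • α with hvdef
    have hfv : f v ≠ 0 := fun h => by linarith [hker v h]
    have hperp : ∀ p, B p v = 0 → 0 ≤ B p p := by
      intro p hp
      have h1 := hker (f p • v - f v • p) (by simp; ring)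
      simp only [map_sub, LinearMap.sub_apply, map_smul, LinearMap.smul_apply, smul_eq_mul,
        hsymm v p, hp] at h1
      by_contra hcon
      have h2 : 0 < f v ^ 2 := by positivity
      nlinarith [mul_nonneg (sq_nonneg (f p)) (neg_nonneg.2 hv.le)]
    have hm : ∀ ω ∈ weights B Δ, 0 ≤ B ω v := by
      rintro ω ⟨I, hI, hz, hpos, -, -⟩
      rw [hsymm, hvdef]
      simp only [map_sum, LinearMap.sum_apply, map_smul, LinearMap.smul_apply, smul_eq_mul]
      refine Finset.sum_nonneg fun α hα => mul_nonneg (hc α hα) ?_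
      by_cases h : α ∈ I
      · exact (hz α h).ge
      · exact (hpos α hα h).le
    have hdeg : ∀ ω ω', B ω ω ≤ 0 → B ω v = 0 → 0 < B ω ω' → False := by
      intro ω ω' h1 h2 h3
      have hv0 := hv.ne
      set r := B ω' v / B v v with hr
      have hrv : r * B v v = B ω' v := by rw [hr]; field_simp
      set q := ω' - r • v with hq
      have hqv : B q v = 0 := by simp [hq, hrv]
      have hωq : B ω q = B ω ω' := by simp [hq, h2]
      have h4 := hperp (q - ((B q q + 1) / (2 * B ω ω')) • ω) (by simp [hqv, h2])
      set s := (B q q + 1) / (2 * B ω ω') with hs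
      have hs' : 2 * s * B ω ω' = B q q + 1 := by rw [hs]; field_simp
      simp only [map_sub, LinearMap.sub_apply, map_smul, LinearMap.smul_apply, smul_eq_mul,
        hsymm q ω, hωq] at h4
      nlinarith [mul_nonneg (sq_nonneg s) (neg_nonneg.2 h1)]
    intro ω hω ω' hω' hne
    constructor
    · by_contra hcon
      have hb : 0 < B ω ω' := not_le.1 hcon
      have hb' : 0 < B ω' ω := by rwa [hsymm]
      have h1 := hcausal ω hω
      have h2 := hcausal ω' hω'
      have hm1 : 0 < B ω v := lt_of_le_of_ne (hm ω hω) fun h => hdeg ω ω' h1 h.symm hb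
      have hm2 : 0 < B ω' v := lt_of_le_of_ne (hm ω' hω') fun h => hdeg ω' ω h2 h.symm hb'
      have h3 := hperp (B ω' v • ω - B ω v • ω') (by simp; ring)
      simp only [map_sub, LinearMap.sub_apply, map_smul, LinearMap.smul_apply, smul_eq_mul,
        hsymm ω' ω] at h3
      nlinarith [mul_pos (mul_pos hm1 hm2) hb, mul_nonneg (sq_nonneg (B ω' v)) (neg_nonneg.2 h1),
        mul_nonneg (sq_nonneg (B ω v)) (neg_nonneg.2 h2)]
    · intro h
      have h1 := hcausal ω hω
      have hω0 : ω ≠ 0 := by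
        rintro rfl
        obtain ⟨I, -, -, -, -, α, -, -, h⟩ := hω
        simp at h
      have := h ω (Submodule.subset_span (by simp)) hω0
      linarith

end BoydMaxwell
end

section
/- Let Δ be a root basis in a non-degenerate quadratic space (V,B). For every x ∈ C*, every w ∈ W and every α ∈ Δ, either B(w(x), α) ≥ 0 and ℓ(s_α·w) > ℓ(w), or B(w(x), α) ≤ 0 and ℓ(s_α·w) < ℓ(w). -/
open scoped BigOperators

namespace BoydMaxwell

variable {V : Type*} [AddCommGroup V] [Module ℝ V]

/-- The word length of a group element with respect to a set of generators. -/
noncomputable def wordLength {G : Type*} [Group G] (S : Set G) (w : G) : ℕ :=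
  sInf { n | ∃ l : List G, (∀ g ∈ l, g ∈ S) ∧ l.length = n ∧ l.prod = w }

/-- The set of simple reflections of a root basis, as linear automorphisms. -/
def simpleReflections {V : Type*} [AddCommGroup V] [Module ℝ V]
    (B : LinearMap.BilinForm ℝ V) (Δ : Finset V) : Set (V ≃ₗ[ℝ] V) :=
  { g | ∃ α ∈ Δ, (g : V →ₗ[ℝ] V) = reflection B α }

/-- Alternating product `a b a b ...` with `n` factors. -/
def altProd {G : Type*} [Group G] : G → G → ℕ → G
  | _, _, 0 => 1
  | a, b, n + 1 => a * altProd b a n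

theorem altProd_snoc {G : Type*} [Group G] (n : ℕ) : ∀ a b : G,
    (altProd a b (n + 1) = altProd a b n * a ∧ altProd a b (n + 2) = altProd a b (n + 1) * b) ∨
    (altProd a b (n + 1) = altProd a b n * b ∧ altProd a b (n + 2) = altProd a b (n + 1) * a) := by
  induction n with
  | zero => intro a b; left; simp [altProd]
  | succ n ih =>
    intro a b
    rcases ih b a with ⟨h1, h2⟩ | ⟨h1, h2⟩
    · right
      refine ⟨?_, ?_⟩
      · change a * altProd b a (n + 1) = a * altProd b a n * b
        rw [h1, mul_assoc]
      · change a * altProd b a (n + 2) = a * altProd b a (n + 1) * a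
        rw [h2, mul_assoc]
    · left
      refine ⟨?_, ?_⟩
      · change a * altProd b a (n + 1) = a * altProd b a n * a
        rw [h1, mul_assoc]
      · change a * altProd b a (n + 2) = a * altProd b a (n + 1) * b
        rw [h2, mul_assoc]

theorem altProd_add {G : Type*} [Group G] (k j : ℕ) : ∀ a b : G,
    altProd a b (k + j) = altProd a b k * altProd a b j ∨
    altProd a b (k + j) = altProd a b k * altProd b a j := by
  induction k with
  | zero => intro a b; left; simp [altProd]
  | succ k ih =>
    intro a b
    rw [Nat.succ_add]
    rcases ih b a with h | h
    · right
      change a * altProd b a (k + j) = a * altProd b a k * _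
      rw [h, mul_assoc]
    · left
      change a * altProd b a (k + j) = a * altProd b a k * _
      rw [h, mul_assoc]

theorem altProd_ratio {G : Type*} [Group G] (n : ℕ) : ∀ a b : G, a * a = 1 → b * b = 1 →
    altProd a b n * (altProd b a n)⁻¹ = (a * b) ^ n := by
  induction n with
  | zero => intro a b _ _; simp [altProd]
  | succ n ih =>
    intro a b ha hb
    change a * altProd b a n * (b * altProd a b n)⁻¹ = _
    have hb' : b⁻¹ = b := inv_eq_of_mul_eq_one_left hb
    rw [mul_inv_rev, hb']
    calc a * altProd b a n * ((altProd a b n)⁻¹ * b)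
        = a * (altProd b a n * (altProd a b n)⁻¹) * b := by group
      _ = a * (b * a) ^ n * b := by rw [ih b a hb ha]
      _ = (a * b) ^ (n + 1) := by
          clear ih
          induction n with
          | zero => simp
          | succ n ih2 =>
            rw [pow_succ' (b * a), pow_succ' (a * b) (n + 1), ← ih2]
            simp only [mul_assoc]

section Length

variable {G : Type*} [Group G] (S : Set G)

theorem wordLength_prod_le (l : List G) (hl : ∀ g ∈ l, g ∈ S) :
    wordLength S l.prod ≤ l.length :=
  Nat.sInf_le ⟨l, hl, rfl, rfl⟩

theorem exists_reduced (hS : ∀ g ∈ S, g * g = 1) (w : G) (hw : w ∈ Subgroup.closure S) :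
    ∃ l : List G, (∀ g ∈ l, g ∈ S) ∧ l.length = wordLength S w ∧ l.prod = w := by
  have hne : { n | ∃ l : List G, (∀ g ∈ l, g ∈ S) ∧ l.length = n ∧ l.prod = w }.Nonempty := by
    suffices h : ∃ l : List G, (∀ g ∈ l, g ∈ S) ∧ l.prod = w by
      obtain ⟨l, h1, h2⟩ := h
      exact ⟨l.length, l, h1, rfl, h2⟩
    induction hw using Subgroup.closure_induction_left with
    | one => exact ⟨[], by simp, by simp⟩
    | mul_left x hx y hy ih =>
      obtain ⟨l, h1, h2⟩ := ih
      refine ⟨x :: l, ?_, by simp [h2]⟩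
      intro g hg
      rcases List.mem_cons.1 hg with rfl | hg
      · exact hx
      · exact h1 g hg
    | inv_mul_cancel x hx y hy ih =>
      obtain ⟨l, h1, h2⟩ := ih
      have : x⁻¹ = x := inv_eq_of_mul_eq_one_left (hS x hx)
      refine ⟨x :: l, ?_, by simp [h2, this]⟩
      intro g hg
      rcases List.mem_cons.1 hg with rfl | hg
      · exact hx
      · exact h1 g hg
  exact Nat.sInf_mem hne

theorem wordLength_mul_le (hS : ∀ g ∈ S, g * g = 1) (w : G) (hw : w ∈ Subgroup.closure S)
    (g : G) (hg : g ∈ S) : wordLength S (g * w) ≤ wordLength S w + 1 := by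
  obtain ⟨l, h1, h2, h3⟩ := exists_reduced S hS w hw
  have := wordLength_prod_le S (g :: l) (by
    intro x hx
    rcases List.mem_cons.1 hx with rfl | hx
    · exact hg
    · exact h1 x hx)
  simpa [h2, h3] using this

theorem altProd_mem (n : ℕ) : ∀ a b : G, a ∈ S → b ∈ S → altProd a b n ∈ Subgroup.closure S := by
  induction n with
  | zero => intro a b _ _; exact one_mem _
  | succ n ih =>
    intro a b ha hb
    exact mul_mem (Subgroup.subset_closure ha) (ih b a hb ha)

theorem wordLength_alt_le (hS : ∀ g ∈ S, g * g = 1) (w : G) (hw : w ∈ Subgroup.closure S)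
    (n : ℕ) : ∀ a b : G, a ∈ S → b ∈ S →
    wordLength S (altProd a b n * w) ≤ n + wordLength S w := by
  induction n with
  | zero => intro a b _ _; simp [altProd]
  | succ n ih =>
    intro a b ha hb
    have h1 := ih b a hb ha
    have h2 := wordLength_mul_le S hS _ (mul_mem (altProd_mem S n b a hb ha) hw) a ha
    rw [← mul_assoc] at h2
    change wordLength S (a * altProd b a n * w) ≤ _
    omega

theorem wordLength_parity (hS : ∀ g ∈ S, g * g = 1) (ε : G →* ℝˣ) (hε : ∀ g ∈ S, ε g = -1)
    (w : G) (hw : w ∈ Subgroup.closure S) : ε w = (-1) ^ wordLength S w := by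
  obtain ⟨l, h1, h2, h3⟩ := exists_reduced S hS w hw
  rw [← h2, ← h3]
  clear h2 h3
  induction l with
  | nil => simp
  | cons a l ih =>
    rw [List.prod_cons, map_mul, ih (fun g hg => h1 g (List.mem_cons_of_mem _ hg)),
      hε a (h1 a List.mem_cons_self), List.length_cons, pow_succ']

theorem wordLength_ne (hS : ∀ g ∈ S, g * g = 1) (ε : G →* ℝˣ) (hε : ∀ g ∈ S, ε g = -1)
    (w : G) (hw : w ∈ Subgroup.closure S) (g : G) (hg : g ∈ S) :
    wordLength S (g * w) ≠ wordLength S w := by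
  intro h
  have h1 := wordLength_parity S hS ε hε w hw
  have h2 := wordLength_parity S hS ε hε (g * w) (mul_mem (Subgroup.subset_closure hg) hw)
  rw [map_mul, hε g hg, h, ← h1] at h2
  have h3 : (-(1:ℝ)) * (ε w : ℝ) = ε w := by
    have := congrArg (Units.val) h2
    simpa using this
  have h4 : (ε w : ℝ) = 0 := by linarith
  exact (ε w).ne_zero h4

theorem exists_descent (hS : ∀ g ∈ S, g * g = 1) (w : G) (hw : w ∈ Subgroup.closure S)
    (hpos : wordLength S w ≠ 0) :
    ∃ h ∈ S, wordLength S (h * w) < wordLength S w := by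
  obtain ⟨l, h1, h2, h3⟩ := exists_reduced S hS w hw
  cases l with
  | nil => exact absurd h2.symm hpos
  | cons a l =>
    have ha := h1 a List.mem_cons_self
    refine ⟨a, ha, ?_⟩
    have h4 := wordLength_prod_le S l (fun g hg => h1 g (List.mem_cons_of_mem _ hg))
    have : a * w = l.prod := by
      rw [← h3, List.prod_cons, ← mul_assoc, hS a ha, one_mul]
    rw [this]
    rw [List.length_cons] at h2
    omega

/-- The dihedral decomposition `w = (h g h ...) v`. -/
theorem dihedral_decomp (hS : ∀ g ∈ S, g * g = 1) (ε : G →* ℝˣ) (hε : ∀ g ∈ S, ε g = -1)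
    (w : G) (hw : w ∈ Subgroup.closure S) (g h : G) (hg : g ∈ S) (hh : h ∈ S)
    (hlt : wordLength S (h * w) < wordLength S w) :
    ∃ n, ∃ v ∈ Subgroup.closure S, w = altProd h g n * v ∧
      wordLength S w = n + wordLength S v ∧ 1 ≤ n ∧
      wordLength S v < wordLength S (g * v) ∧ wordLength S v < wordLength S (h * v) := by
  set P : Set ℕ := { n | ∃ v ∈ Subgroup.closure S, w = altProd h g n * v ∧
      wordLength S w = n + wordLength S v } with hP
  have hmem : ∀ a ∈ S, ∀ v ∈ Subgroup.closure S, a * v ∈ Subgroup.closure S :=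
    fun a ha v hv => mul_mem (Subgroup.subset_closure ha) hv
  have hcan : ∀ a ∈ S, ∀ v : G, a * (a * v) = v := by
    intro a ha v
    rw [← mul_assoc, hS a ha, one_mul]
  have hup : ∀ a ∈ S, ∀ v ∈ Subgroup.closure S,
      wordLength S v ≤ wordLength S (a * v) + 1 := by
    intro a ha v hv
    have := wordLength_mul_le S hS _ (hmem a ha v hv) a ha
    rwa [hcan a ha] at this
  have h1 : 1 ∈ P := by
    refine ⟨h * w, hmem h hh w hw, ?_, ?_⟩
    · simp [altProd, hcan h hh]
    · have := hup h hh w hw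
      omega
  have hb : BddAbove P := ⟨wordLength S w, by
    rintro n ⟨v, _, _, h3⟩
    omega⟩
  have hmax : ∀ m ∈ P, m ≤ sSup P := fun m hm => le_csSup hb hm
  obtain ⟨v, hv, hwv, hl⟩ := Nat.sSup_mem ⟨1, h1⟩ hb
  have hn1 : 1 ≤ sSup P := hmax 1 h1
  generalize sSup P = n at *
  obtain ⟨m, rfl⟩ : ∃ m, n = m + 1 := ⟨n - 1, by omega⟩
  have key : ∀ c ∈ S, ∀ d ∈ S, altProd h g (m + 1) = altProd h g m * c →
      altProd h g (m + 2) = altProd h g (m + 1) * d →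
      wordLength S v < wordLength S (c * v) ∧ wordLength S v < wordLength S (d * v) := by
    intro c hc d hd e1 e2
    constructor
    · by_contra hcon
      have hne := wordLength_ne S hS ε hε v hv c hc
      have := wordLength_alt_le S hS (c * v) (hmem c hc v hv) m h g hh hg
      rw [← mul_assoc, ← e1, ← hwv] at this
      omega
    · by_contra hcon
      have hne := wordLength_ne S hS ε hε v hv d hd
      have hle := hup d hd v hv
      have : m + 2 ∈ P := by
        refine ⟨d * v, hmem d hd v hv, ?_, ?_⟩
        · rw [e2, mul_assoc, hcan d hd, ← hwv]
        · omega
      have := hmax _ this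
      omega
  refine ⟨m + 1, v, hv, hwv, hl, hn1, ?_⟩
  rcases altProd_snoc m h g with ⟨e1, e2⟩ | ⟨e1, e2⟩
  · exact (key h hh g hg e1 e2).symm
  · exact key g hg h hh e1 e2

end Length

section Chebyshev

/-- Chebyshev-like sequence with `U 0 = 0`, `U 1 = 1`. -/
noncomputable def chebU (c : ℝ) : ℕ → ℝ
  | 0 => 0
  | 1 => 1
  | n + 2 => 2 * c * chebU c (n + 1) - chebU c n

theorem chebU_nonneg_of_one_le (c : ℝ) (hc : 1 ≤ c) (n : ℕ) : 0 ≤ chebU c n := by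
  have : 0 ≤ chebU c n ∧ chebU c n ≤ chebU c (n + 1) := by
    induction n with
    | zero => simp [chebU]
    | succ n ih =>
      refine ⟨by linarith [ih.1, ih.2], ?_⟩
      rw [chebU]
      nlinarith [ih.1, ih.2]
  exact this.1

theorem chebU_sin (θ : ℝ) (n : ℕ) : chebU (Real.cos θ) n * Real.sin θ = Real.sin (n * θ) := by
  have : chebU (Real.cos θ) n * Real.sin θ = Real.sin (n * θ) ∧
      chebU (Real.cos θ) (n + 1) * Real.sin θ = Real.sin ((n + 1) * θ) := by
    induction n with
    | zero => simp [chebU]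
    | succ n ih =>
      refine ⟨by simpa using ih.2, ?_⟩
      rw [chebU, sub_mul, ih.1, mul_assoc, ih.2]
      push_cast
      have e1 : ((n : ℝ) + 1 + 1) * θ = (n + 1) * θ + θ := by ring
      have e2 : (n : ℝ) * θ = (n + 1) * θ - θ := by ring
      rw [e1, e2, Real.sin_add, Real.sin_sub]
      ring
  exact this.1

theorem sin_pi_div_pos (k : ℕ) (hk : 2 ≤ k) : 0 < Real.sin (Real.pi / k) := by
  have hk' : (2 : ℝ) ≤ k := by exact_mod_cast hk
  apply Real.sin_pos_of_pos_of_lt_pi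
  · have := Real.pi_pos
    positivity
  · rw [div_lt_iff₀ (by linarith)]
    nlinarith [Real.pi_pos]

theorem chebU_nonneg_of_le (k : ℕ) (hk : 2 ≤ k) (n : ℕ) (hn : n ≤ k) :
    0 ≤ chebU (Real.cos (Real.pi / k)) n := by
  have hs := sin_pi_div_pos k hk
  have h := chebU_sin (Real.pi / k) n
  have hk' : (0 : ℝ) < k := by
    have : 0 < k := by omega
    exact_mod_cast this
  have hn' : (n : ℝ) ≤ k := by exact_mod_cast hn
  have h2 : 0 ≤ Real.sin (n * (Real.pi / k)) := by
    apply Real.sin_nonneg_of_nonneg_of_le_pi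
    · have := Real.pi_pos
      positivity
    · rw [← mul_div_assoc, div_le_iff₀ hk']
      nlinarith [Real.pi_pos]
  rw [← h] at h2
  exact nonneg_of_mul_nonneg_left h2 hs

end Chebyshev

section Dihedral

variable {V : Type*} [AddCommGroup V] [Module ℝ V]

theorem alt_form (B : LinearMap.BilinForm ℝ V) (hsymm : ∀ x y : V, B x y = B y x)
    (α β : V) (hα : B α α = 1) (hβ : B β β = 1) (c : ℝ) (hc : B α β = -c)
    (g h : V ≃ₗ[ℝ] V) (hg : ∀ z, g z = z - (2 * B α z) • α)
    (hh : ∀ z, h z = z - (2 * B β z) • β) (y : V) (hy1 : 0 ≤ B y α) (hy2 : 0 ≤ B y β) (n : ℕ) :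
    ∃ p q : ℝ, 0 ≤ p ∧ 0 ≤ q ∧
      B (altProd h g n y) α = chebU c (n + 1) * p + chebU c n * q ∧
      B (altProd g h n y) β = chebU c (n + 1) * q + chebU c n * p ∧
      B (altProd h g (n + 1) y) α = chebU c (n + 2) * q + chebU c (n + 1) * p ∧
      B (altProd g h (n + 1) y) β = chebU c (n + 2) * p + chebU c (n + 1) * q := by
  have hc' : B β α = -c := by rw [hsymm, hc]
  have ga : ∀ z, B (g z) α = - B z α := by
    intro z
    rw [hg, map_sub, map_smul]
    simp only [LinearMap.sub_apply, LinearMap.smul_apply, smul_eq_mul, hα, hsymm α z]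
    ring
  have gb : ∀ z, B (g z) β = B z β + 2 * c * B z α := by
    intro z
    rw [hg, map_sub, map_smul]
    simp only [LinearMap.sub_apply, LinearMap.smul_apply, smul_eq_mul, hc, hsymm α z]
    ring
  have hb : ∀ z, B (h z) β = - B z β := by
    intro z
    rw [hh, map_sub, map_smul]
    simp only [LinearMap.sub_apply, LinearMap.smul_apply, smul_eq_mul, hβ, hsymm β z]
    ring
  have ha : ∀ z, B (h z) α = B z α + 2 * c * B z β := by
    intro z
    rw [hh, map_sub, map_smul]
    simp only [LinearMap.sub_apply, LinearMap.smul_apply, smul_eq_mul, hc', hsymm β z]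
    ring
  induction n with
  | zero =>
    refine ⟨B y α, B y β, hy1, hy2, ?_, ?_, ?_, ?_⟩ <;>
    simp [altProd, chebU, ha, gb] <;> ring
  | succ n ih =>
    obtain ⟨p, q, hp, hq, h1, h2, h3, h4⟩ := ih
    refine ⟨q, p, hq, hp, h3, h4, ?_, ?_⟩
    · change B (h (altProd g h (n + 1) y)) α = _
      rw [ha, h4]
      change B (g (altProd h g n y)) α + _ = _
      rw [ga, h1]
      simp only [chebU]
      ring
    · change B (g (altProd h g (n + 1) y)) β = _
      rw [gb, h3]
      change B (h (altProd g h n y)) β + _ = _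
      rw [hb, h2]
      simp only [chebU]
      ring

theorem braid_pow (B : LinearMap.BilinForm ℝ V) (hsymm : ∀ x y : V, B x y = B y x)
    (α β : V) (hα : B α α = 1) (hβ : B β β = 1) (k : ℕ) (hk : 2 ≤ k)
    (hc : B α β = -Real.cos (Real.pi / k))
    (g h : V ≃ₗ[ℝ] V) (hg : ∀ z, g z = z - (2 * B α z) • α)
    (hh : ∀ z, h z = z - (2 * B β z) • β) : (g * h) ^ k = 1 := by
  set θ := Real.pi / k with hθ
  have hs : 0 < Real.sin θ := sin_pi_div_pos k hk
  have hc' : B β α = -Real.cos θ := by rw [hsymm, hc]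
  have hab : ∀ n : ℕ,
      Real.sin θ • ((g * h) ^ n) α = Real.sin (2 * n * θ + θ) • α + Real.sin (2 * n * θ) • β ∧
      Real.sin θ • ((g * h) ^ n) β
        = -(Real.sin (2 * n * θ) • α) - Real.sin (2 * n * θ - θ) • β := by
    intro n
    have gha : ∀ a b : ℝ, (g * h) (a • α + b • β) =
        ((4 * Real.cos θ ^ 2 - 1) * a - 2 * Real.cos θ * b) • α
          + (2 * Real.cos θ * a - b) • β := by
      intro a b
      change g (h (a • α + b • β)) = _
      rw [hh, hg]
      simp only [map_add, map_smul, map_sub, hα, hβ, hc, hc', smul_eq_mul]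
      module
    induction n with
    | zero => simp
    | succ n ih =>
      have hsq := Real.sin_sq_add_cos_sq θ
      have e0 : (2 * ((n + 1 : ℕ) : ℝ) * θ) = 2 * n * θ + (θ + θ) := by push_cast; ring
      have e1 : (2 * ((n + 1 : ℕ) : ℝ) * θ + θ) = 2 * n * θ + (θ + θ + θ) := by push_cast; ring
      have e2 : (2 * ((n + 1 : ℕ) : ℝ) * θ - θ) = 2 * n * θ + θ := by push_cast; ring
      rw [e1, e2, e0]
      constructor
      · rw [pow_succ', LinearEquiv.mul_apply, ← map_smul, ih.1, gha]
        congr 2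
        · simp only [Real.sin_add, Real.cos_add]
          linear_combination (3 * Real.sin (2 * n * θ) * Real.cos θ
            + Real.cos (2 * n * θ) * Real.sin θ) * hsq
        · simp only [Real.sin_add, Real.cos_add]
          linear_combination (Real.sin (2 * n * θ)) * hsq
      · rw [pow_succ', LinearEquiv.mul_apply, ← map_smul, ih.2]
        have : -(Real.sin (2 * n * θ) • α) - Real.sin (2 * n * θ - θ) • β
          = (-Real.sin (2 * n * θ)) • α + (-Real.sin (2 * n * θ - θ)) • β := by module
        rw [this, gha, ← neg_smul, sub_eq_add_neg (_ • α), ← neg_smul]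
        congr 2
        · simp only [Real.sin_add, Real.cos_add, Real.sin_sub]
          linear_combination (-Real.sin (2 * n * θ)) * hsq
        · simp only [Real.sin_add, Real.cos_add, Real.sin_sub]
          ring
  have hk0 : (k : ℝ) ≠ 0 := by
    have : k ≠ 0 := by omega
    exact_mod_cast this
  have hkθ : 2 * (k : ℝ) * θ = 2 * Real.pi := by
    rw [hθ]; field_simp
  obtain ⟨fa, fb⟩ := hab k
  rw [hkθ] at fa fb
  have fa' : ((g * h) ^ k) α = α := by
    have e : Real.sin (2 * Real.pi + θ) = Real.sin θ := by
      rw [add_comm, Real.sin_add_two_pi]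
    rw [e, Real.sin_two_pi, zero_smul, add_zero] at fa
    exact smul_right_injective V hs.ne' fa
  have fb' : ((g * h) ^ k) β = β := by
    have e : Real.sin (2 * Real.pi - θ) = -Real.sin θ := Real.sin_two_pi_sub θ
    rw [e, Real.sin_two_pi, zero_smul, neg_zero, zero_sub, neg_smul, neg_neg] at fb
    exact smul_right_injective V hs.ne' fb
  have fperp : ∀ z, B α z = 0 → B β z = 0 → ∀ n : ℕ, ((g * h) ^ n) z = z := by
    intro z h1 h2 n
    induction n with
    | zero => simp
    | succ n ih =>
      rw [pow_succ', LinearEquiv.mul_apply, ih]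
      change g (h z) = z
      rw [hh, h2]
      simp [hg, h1]
  ext x
  have hsq := Real.sin_sq_add_cos_sq θ
  set a := B α x
  set b := B β x
  set p := (a + Real.cos θ * b) / Real.sin θ ^ 2 with hp
  set q := (b + Real.cos θ * a) / Real.sin θ ^ 2 with hq
  have hp' : p * Real.sin θ ^ 2 = a + Real.cos θ * b := by rw [hp]; field_simp
  have hq' : q * Real.sin θ ^ 2 = b + Real.cos θ * a := by rw [hq]; field_simp
  have hs2 : Real.sin θ ^ 2 ≠ 0 := by positivity
  have z1 : B α (x - p • α - q • β) = 0 := by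
    simp only [map_sub, map_smul, hα, hc, smul_eq_mul]
    apply mul_right_cancel₀ hs2
    change (a - p * 1 - q * (-Real.cos θ)) * _ = _
    linear_combination -hp' + Real.cos θ * hq' + a * hsq
  have z2 : B β (x - p • α - q • β) = 0 := by
    simp only [map_sub, map_smul, hβ, hc', smul_eq_mul]
    apply mul_right_cancel₀ hs2
    change (b - p * (-Real.cos θ) - q * 1) * _ = _
    linear_combination -hq' + Real.cos θ * hp' + b * hsq
  have := fperp _ z1 z2 k
  rw [map_sub, map_sub, map_smul, map_smul, fa', fb'] at this
  simpa using this

end Dihedral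

theorem reflection_formula {V : Type*} [AddCommGroup V] [Module ℝ V]
    (B : LinearMap.BilinForm ℝ V) (α : V) (g : V ≃ₗ[ℝ] V)
    (h : (g : V →ₗ[ℝ] V) = reflection B α) (z : V) : g z = z - (2 * B α z) • α := by
  have := LinearMap.congr_fun h z
  simp only [LinearEquiv.coe_coe, reflection, LinearMap.sub_apply, LinearMap.id_apply,
    LinearMap.smulRight_apply] at this
  rw [this]
  module

theorem reflection_sq {V : Type*} [AddCommGroup V] [Module ℝ V]
    (B : LinearMap.BilinForm ℝ V) (α : V) (hα : B α α = 1) (g : V ≃ₗ[ℝ] V)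
    (h : (g : V →ₗ[ℝ] V) = reflection B α) : g * g = 1 := by
  ext z
  change g (g z) = z
  rw [reflection_formula B α g h z, reflection_formula B α g h]
  simp only [map_sub, map_smul, hα, smul_eq_mul]
  module

theorem reflection_det {V : Type*} [AddCommGroup V] [Module ℝ V] [FiniteDimensional ℝ V]
    (B : LinearMap.BilinForm ℝ V) (α : V) (hα : B α α = 1) (g : V ≃ₗ[ℝ] V)
    (h : (g : V →ₗ[ℝ] V) = reflection B α) : LinearEquiv.det g = -1 := by
  apply Units.ext
  rw [LinearEquiv.coe_det, h]
  have : reflection B α = LinearMap.transvection (B α) ((-2 : ℝ) • α) := by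
    ext z
    simp only [reflection, LinearMap.sub_apply, LinearMap.id_apply,
      LinearMap.smulRight_apply, LinearMap.transvection.apply]
    module
  rw [this, LinearMap.transvection.det, map_smul, hα]
  norm_num

theorem chamber_pos
    {V : Type*} [AddCommGroup V] [Module ℝ V] [FiniteDimensional ℝ V]
    (B : LinearMap.BilinForm ℝ V) (hsymm : ∀ x y : V, B x y = B y x)
    (Δ : Finset V) (hΔ : IsRootBasis B Δ) (x : V) (hx : x ∈ chamber B Δ) (N : ℕ) :
    ∀ w ∈ weylGroup B Δ, wordLength (simpleReflections B Δ) w = N → ∀ α ∈ Δ,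
      ∀ g : V ≃ₗ[ℝ] V, (g : V →ₗ[ℝ] V) = reflection B α →
      wordLength (simpleReflections B Δ) w < wordLength (simpleReflections B Δ) (g * w) →
      0 ≤ B (w x) α := by
  induction N using Nat.strong_induction_on with
  | _ N IH =>
  intro w hw hN α hα g hg hlt
  set S := simpleReflections B Δ with hSdef
  have hS : ∀ g ∈ S, g * g = 1 := by
    rintro g ⟨a, ha, hga⟩
    exact reflection_sq B a (hΔ.unit a ha) g hga
  have hε : ∀ g ∈ S, (LinearEquiv.det : (V ≃ₗ[ℝ] V) →* ℝˣ) g = -1 := by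
    rintro g ⟨a, ha, hga⟩
    exact reflection_det B a (hΔ.unit a ha) g hga
  have hgS : g ∈ S := ⟨α, hα, hg⟩
  change w ∈ Subgroup.closure S at hw
  by_cases h0 : wordLength S w = 0
  · obtain ⟨l, h1, h2, h3⟩ := exists_reduced S hS w hw
    rw [h0, List.length_eq_zero_iff] at h2
    subst h2
    rw [← h3]
    exact hx α hα
  obtain ⟨h, hhS, hdesc⟩ := exists_descent S hS w hw h0
  obtain ⟨β, hβ, hh⟩ := id hhS
  have hαβ : α ≠ β := by
    rintro rfl
    have : g = h := LinearEquiv.toLinearMap_injective (hg.trans hh.symm)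
    rw [this] at hlt
    omega
  obtain ⟨n, v, hv, hwv, hl, hn1, hvg, hvh⟩ :=
    dihedral_decomp S hS LinearEquiv.det hε w hw g h hgS hhS hdesc
  have hy1 := IH (wordLength S v) (by omega) v hv rfl α hα g hg hvg
  have hy2 := IH (wordLength S v) (by omega) v hv rfl β hβ h hh hvh
  have hgf := reflection_formula B α g hg
  have hhf := reflection_formula B β h hh
  have hwx : w x = altProd h g n (v x) := by
    rw [hwv]; rfl
  have fin : ∀ c : ℝ, B α β = -c → 0 ≤ chebU c n → 0 ≤ chebU c (n + 1) → 0 ≤ B (w x) α := by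
    intro c hc hu1 hu2
    obtain ⟨p, q, hp, hq, h1, -⟩ := alt_form B hsymm α β (hΔ.unit α hα) (hΔ.unit β hβ) c hc
      g h hgf hhf (v x) hy1 hy2 n
    rw [hwx, h1]
    positivity
  rcases hΔ.offdiag α hα β hβ hαβ with hle | ⟨k, hk, hc⟩
  · exact fin (-(B α β)) (by ring) (chebU_nonneg_of_one_le _ (by linarith) _)
      (chebU_nonneg_of_one_le _ (by linarith) _)
  · by_cases hnk : n + 1 ≤ k
    · exact fin _ hc (chebU_nonneg_of_le k hk n (by omega)) (chebU_nonneg_of_le k hk _ hnk)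
    · exfalso
      have hbr : altProd g h k = altProd h g k := by
        have h1 := altProd_ratio k g h (hS g hgS) (hS h hhS)
        rw [braid_pow B hsymm α β (hΔ.unit α hα) (hΔ.unit β hβ) k hk hc g h hgf hhf] at h1
        exact mul_inv_eq_one.1 h1
      obtain ⟨j, rfl⟩ : ∃ j, n = k + j := ⟨n - k, by omega⟩
      obtain ⟨m, rfl⟩ : ∃ m, k = m + 1 := ⟨k - 1, by omega⟩
      have main : ∀ a ∈ S, ∀ b ∈ S, altProd h g (m + 1 + j) = altProd h g (m + 1) * altProd a b j →
          False := by
        intro a ha b hb e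
        have hgw : g * w = altProd h g m * (altProd a b j * v) := by
          rw [hwv, e, ← hbr]
          change g * (g * altProd h g m * altProd a b j * v) = _
          calc g * (g * altProd h g m * altProd a b j * v)
              = (g * g) * (altProd h g m * (altProd a b j * v)) := by simp only [mul_assoc]
            _ = _ := by rw [hS g hgS, one_mul]
        have l1 := wordLength_alt_le S hS v hv j a b ha hb
        have l2 := wordLength_alt_le S hS (altProd a b j * v)
          (mul_mem (altProd_mem S j a b ha hb) hv) m h g hhS hgS
        rw [← hgw] at l2
        omega
      rcases altProd_add (m + 1) j h g with e | e
      · exact main h hhS g hgS e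
      · exact main g hgS h hhS e

/-- extending Maxwell, Corollary 1.8. For `x` in the
fundamental chamber, `w ∈ W` and a simple root `α ∈ Δ` with simple reflection
`s_α`, either `B(w(x), α) ≥ 0` and `ℓ(s_α w) > ℓ(w)`, or `B(w(x), α) ≤ 0` and
`ℓ(s_α w) < ℓ(w)`. -/
theorem chamber_length
    {V : Type*} [AddCommGroup V] [Module ℝ V] [FiniteDimensional ℝ V]
    (B : LinearMap.BilinForm ℝ V) (hsymm : ∀ x y : V, B x y = B y x)
    (hnd : B.Nondegenerate)
    (Δ : Finset V) (hΔ : IsRootBasis B Δ) :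
    ∀ x ∈ chamber B Δ, ∀ w ∈ weylGroup B Δ, ∀ α ∈ Δ,
      ∀ g : V ≃ₗ[ℝ] V, (g : V →ₗ[ℝ] V) = reflection B α →
      (0 ≤ B (w x) α ∧
        wordLength (simpleReflections B Δ) w <
          wordLength (simpleReflections B Δ) (g * w)) ∨
      (B (w x) α ≤ 0 ∧
        wordLength (simpleReflections B Δ) (g * w) <
          wordLength (simpleReflections B Δ) w) := by
  intro x hx w hw α hα g hg
  have hS : ∀ g ∈ simpleReflections B Δ, g * g = 1 := by
    rintro g ⟨a, ha, hga⟩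
    exact reflection_sq B a (hΔ.unit a ha) g hga
  have hε : ∀ g ∈ simpleReflections B Δ,
      (LinearEquiv.det : (V ≃ₗ[ℝ] V) →* ℝˣ) g = -1 := by
    rintro g ⟨a, ha, hga⟩
    exact reflection_det B a (hΔ.unit a ha) g hga
  have hgS : g ∈ simpleReflections B Δ := ⟨α, hα, hg⟩
  have hne := wordLength_ne (simpleReflections B Δ) hS LinearEquiv.det hε w hw g hgS
  rcases lt_or_gt_of_ne hne with hlt | hlt
  · right
    refine ⟨?_, hlt⟩
    have hgw : g * w ∈ weylGroup B Δ := mul_mem (Subgroup.subset_closure hgS) hw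
    have e : g * (g * w) = w := by rw [← mul_assoc, hS g hgS, one_mul]
    have h1 := chamber_pos B hsymm Δ hΔ x hx _ (g * w) hgw rfl α hα g hg (by rw [e]; exact hlt)
    change 0 ≤ B (g (w x)) α at h1
    rw [reflection_formula B α g hg, map_sub, map_smul] at h1
    simp only [LinearMap.sub_apply, LinearMap.smul_apply, smul_eq_mul, hΔ.unit α hα,
      hsymm α (w x)] at h1
    linarith
  · left
    exact ⟨chamber_pos B hsymm Δ hΔ x hx _ w hw rfl α hα g hg hlt, hlt⟩

end BoydMaxwell
end
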